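/- Let U_0, B_0 ∈ L^∞(ℝ^D) be divergence-free and ν, μ > 0, and let (U^(n), B^(n), Π^(n)) be the approximation scheme for the MHD system. Then there exist constants C_1 ≥ 1 and c > 0 depending only on μ, ν and D such that if 0 < T ≤ c (‖U_0‖_{L^∞} + ‖B_0‖_{L^∞})^{−2}, then for every n ∈ ℕ, ‖U^(n)‖_{L^∞([0,T)×ℝ^D)} + ‖B^(n)‖_{L^∞([0,T)×ℝ^D)} ≤ 2 C_1 (‖U_0‖_{L^∞(ℝ^D)} + ‖B_0‖_{L^∞(ℝ^D)}). -/

import Mathlib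

/-!
The bounds are proved by induction on `n`. With `M = ‖U₀‖ + ‖B₀‖` and `K = (D + 1) M`, the claim is
that `|U^(n)|, |B^(n)| ≤ K` on `[0,T)`. The heat semigroup does not increase the sup norm, and each
Duhamel term is at most `C(D, ν, μ) K² √t` (`step_bound`), so the induction closes as soon as `M √T`
is smaller than a constant depending on `D`, `ν`, `μ`. For the quadratic terms the bound
`∫ |∂_j G_λ(·, t)| ≤ C (λt)^{-1/2}` suffices, because `(t - s)^{-1/2}` is integrable on `(0, t)`.

The pressure term needs `|∂_k G_λ(·, t) * Π| ≤ C(D) ‖g‖_∞ (λt)^{-1/2}` for a BMO solution of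
`ΔΠ = -∂_j ∂_l g_{jl}` (`pressure_bound`). The BMO condition enters only
qualitatively; the size comes from the Poisson equation. Put `a = 1/(4λt)` and
`F(a) = ∂_k G * Π`. By the heat equation `dF/da` is a multiple of `∂_k ΔG * Π`; testing the Poisson
equation with the Schwartz function `∂_k G` moves `Δ` to `g`, and third derivatives of a Gaussian
give `|dF/da| ≤ C ‖g‖_∞ a^{-1/2}`. Moreover `F(a) → 0` as `a → 0`, that is for large times: a BMO
function is integrable against `(1 + |w - x|)^{-(D+1)}` (`IsBMO.integrable_weight`, from the
logarithmic growth of its averages over dyadic balls), and this weight dominates `∂_k G` uniformly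
for `a ≤ 1`. Integrating from `0` to `a` gives `|F(a)| ≤ C ‖g‖_∞ √a`.
-/

open MeasureTheory Real Set

noncomputable section

/-- `ℝ^D` as a Euclidean space. -/
abbrev Spc (D : ℕ) := EuclideanSpace ℝ (Fin D)

/-- `ℂ^D` as a (complex) Euclidean space. -/
abbrev CSpc (D : ℕ) := EuclideanSpace ℂ (Fin D)

variable {D : ℕ}

/-- The heat kernel `G_λ(x,t) = (4πλt)^{-D/2} exp(-|x|²/(4λt))`. -/
def heatK (D : ℕ) (lam : ℝ) (x : Spc D) (t : ℝ) : ℝ :=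
  (4 * π * lam * t) ^ (-(D : ℝ) / 2) * Real.exp (-‖x‖ ^ 2 / (4 * lam * t))

/-- Spatial partial derivative in the `j`-th coordinate direction. -/
def pd (j : Fin D) (f : Spc D → ℝ) (x : Spc D) : ℝ :=
  fderiv ℝ f x (EuclideanSpace.single j 1)

/-- Laplacian. -/
def lap (f : Spc D → ℝ) (x : Spc D) : ℝ := ∑ j, pd j (fun y => pd j f y) x

/-- Membership in `L^∞` for a (bounded, measurable) vector field. -/
def MemLinf (f : Spc D → Spc D) : Prop :=
  AEStronglyMeasurable f volume ∧ BddAbove (Set.range fun x => ‖f x‖)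

/-- The `L^∞`-norm (supremum norm) of a vector field. -/
def supN (f : Spc D → Spc D) : ℝ := ⨆ x, ‖f x‖

/-- The sup norm in space of a time slice of a time dependent field. -/
def slN (F : ℝ → Spc D → Spc D) (t : ℝ) : ℝ := ⨆ x, ‖F t x‖

/-- Sup norm over the space-time region `(0,T) × ℝ^D`. -/
def stSup (T : ℝ) (F : ℝ → Spc D → Spc D) : ℝ :=
  ⨆ t ∈ Set.Ioo (0 : ℝ) T, ⨆ x, ‖F t x‖

/-- Sup norm over the space-time region `[0,T) × ℝ^D`. -/
def stSupIco (T : ℝ) (F : ℝ → Spc D → Spc D) : ℝ :=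
  ⨆ t ∈ Set.Ico (0 : ℝ) T, ⨆ x, ‖F t x‖

/-- The set of mean oscillations of `f` over all Euclidean balls. -/
def oscSet (f : Spc D → ℝ) : Set ℝ :=
  {v | ∃ (c : Spc D) (r : ℝ), 0 < r ∧
    v = ⨍ y in Metric.ball c r, |f y - ⨍ z in Metric.ball c r, f z|}

/-- The BMO seminorm of `f`. -/
def bmoNorm (f : Spc D → ℝ) : ℝ := sSup (oscSet f)

/-- `f` is of bounded mean oscillation. -/
def IsBMO (f : Spc D → ℝ) : Prop :=
  LocallyIntegrable f volume ∧ BddAbove (oscSet f)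

/-- Divergence-free in the sense of distributions. -/
def DivFree (F : Spc D → Spc D) : Prop :=
  ∀ φ : SchwartzMap (Spc D) ℝ, ∑ j, ∫ x, F x j * pd j (⇑φ) x = 0

/-- `p` solves `Δ p = -∂_j∂_k g_{jk}` (summed over `j,k`) in the sense of distributions. -/
def SolvesPoisson (D : ℕ) (p : Spc D → ℝ) (g : Fin D → Fin D → Spc D → ℝ) : Prop :=
  ∀ φ : SchwartzMap (Spc D) ℝ,
    ∫ x, p x * lap (⇑φ) x
      = - ∑ j, ∑ k, ∫ x, g j k x * pd j (fun y => pd k (⇑φ) y) x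

/-- Mild solution of the MHD system with viscosity `ν`, diffusivity `μ`, data `U₀, B₀`;
the Duhamel identities hold at every time in `I`. -/
def MildMHD (D : ℕ) (ν μ : ℝ) (U₀ B₀ : Spc D → Spc D) (I : Set ℝ)
    (U B : ℝ → Spc D → Spc D) : Prop :=
  ∃ P : ℝ → Spc D → ℝ,
    (∀ t ∈ I, IsBMO (P t) ∧
      SolvesPoisson D (P t)
        (fun j k x => U t x j * U t x k - B t x j * B t x k)) ∧
    (∀ t ∈ I, BddAbove (Set.range fun x => ‖U t x‖) ∧
      BddAbove (Set.range fun x => ‖B t x‖)) ∧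
    (∀ t ∈ I, ∀ (x : Spc D) (k : Fin D),
      U t x k = (∫ w, heatK D ν (x - w) t * U₀ w k)
        - (∫ s in Set.Ioo (0 : ℝ) t, ∫ w,
            ∑ j, pd j (fun y => heatK D ν y (t - s)) (x - w)
              * (U s w j * U s w k - B s w j * B s w k))
        - (∫ s in Set.Ioo (0 : ℝ) t, ∫ w,
            pd k (fun y => heatK D ν y (t - s)) (x - w) * P s w) ∧
      B t x k = (∫ w, heatK D μ (x - w) t * B₀ w k)
        - (∫ s in Set.Ioo (0 : ℝ) t, ∫ w,
            ∑ j, pd j (fun y => heatK D μ y (t - s)) (x - w)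
              * (U s w j * B s w k - B s w j * U s w k)))

/-- The approximation scheme for the MHD system. -/
def ApproxMHD (D : ℕ) (ν μ : ℝ) (U₀ B₀ : Spc D → Spc D)
    (U B : ℕ → ℝ → Spc D → Spc D) (P : ℕ → ℝ → Spc D → ℝ) : Prop :=
  (∀ t x, U 0 t x = 0) ∧ (∀ t x, B 0 t x = 0) ∧ (∀ t x, P 0 t x = 0) ∧
  (∀ n : ℕ, ∀ x, U (n + 1) 0 x = U₀ x ∧ B (n + 1) 0 x = B₀ x) ∧
  (∀ (n : ℕ) (t : ℝ), 0 < t → ∀ (x : Spc D) (k : Fin D),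
    U (n + 1) t x k = (∫ w, heatK D ν (x - w) t * U₀ w k)
      - (∫ s in Set.Ioo (0 : ℝ) t, ∫ w,
          ∑ j, pd j (fun y => heatK D ν y (t - s)) (x - w)
            * (U n s w j * U n s w k - B n s w j * B n s w k))
      - (∫ s in Set.Ioo (0 : ℝ) t, ∫ w,
          pd k (fun y => heatK D ν y (t - s)) (x - w) * P n s w) ∧
    B (n + 1) t x k = (∫ w, heatK D μ (x - w) t * B₀ w k)
      - (∫ s in Set.Ioo (0 : ℝ) t, ∫ w,
          ∑ j, pd j (fun y => heatK D μ y (t - s)) (x - w)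
            * (U n s w j * B n s w k - B n s w j * U n s w k))) ∧
  (∃ Cd : ℝ, 0 < Cd ∧ ∀ (n : ℕ) (t : ℝ), 0 < t →
    IsBMO (P (n + 1) t) ∧
    SolvesPoisson D (P (n + 1) t)
      (fun j k x => U (n + 1) t x j * U (n + 1) t x k - B (n + 1) t x j * B (n + 1) t x k) ∧
    bmoNorm (P (n + 1) t)
      ≤ Cd * ⨆ x, ∑ j, ∑ k,
          |U (n + 1) t x j * U (n + 1) t x k - B (n + 1) t x j * B (n + 1) t x k|)

/-- The imaginary part of a point of `ℂ^D` as a point of `ℝ^D`. -/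
def imPart (z : CSpc D) : Spc D := (WithLp.equiv 2 (Fin D → ℝ)).symm fun j => (z j).im

/-- The canonical embedding `ℝ^D ↪ ℂ^D`. -/
def toC (x : Spc D) : CSpc D := (WithLp.equiv 2 (Fin D → ℂ)).symm fun j => (x j : ℂ)

/-- The closed strip `{x + iy ∈ ℂ^D : |y| ≤ ρ}`. -/
def strip (D : ℕ) (ρ : ℝ) : Set (CSpc D) := {z | ‖imPart z‖ ≤ ρ}

/-- Super-level set of a time dependent vector field. -/
def superLevel (F : ℝ → Spc D → Spc D) (t M : ℝ) : Set (Spc D) :=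
  {x | M < ‖F t x‖}

/-- `S` is linearly `δ`-sparse around `x₀` at scale `r`. -/
def LinSparse (δ : ℝ) (S : Set (Spc D)) (x₀ : Spc D) (r : ℝ) : Prop :=
  ∃ d : Spc D, ‖d‖ = 1 ∧
    (volume {τ : ℝ | τ ∈ Set.Ioo (-r) r ∧ x₀ + τ • d ∈ S}).toReal ≤ δ * (2 * r)

/-- The uniform analytic extension property for the constant `C₄`: mild solutions with
bounded divergence-free data extend holomorphically to the strip of width `√t/(2C₄)`
with the uniform bound `2βC₄(‖V₀‖_∞ + ‖W₀‖_∞)`. -/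
def UnifAnalExt (D : ℕ) (ν μ : ℝ) (C₄ : ℝ) : Prop :=
  ∀ (V₀ W₀ : Spc D → Spc D) (Tstar : ℝ) (V W : ℝ → Spc D → Spc D),
    MemLinf V₀ → MemLinf W₀ → DivFree V₀ → DivFree W₀ →
    MildMHD D ν μ V₀ W₀ (Set.Ioo 0 Tstar) V W →
    ∀ β ∈ Set.Ioc (1 / 2 : ℝ) 1, ∀ t : ℝ, 0 < t →
      t < min Tstar ((2 * β - 1) ^ 2 / β ^ 4
          * (1 / (16 * C₄ ^ 4 * (supN V₀ + supN W₀) ^ 2))) →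
      ∃ F H : CSpc D → CSpc D,
        AnalyticOnNhd ℂ F (strip D (Real.sqrt t / (2 * C₄))) ∧
        AnalyticOnNhd ℂ H (strip D (Real.sqrt t / (2 * C₄))) ∧
        (∀ x : Spc D, F (toC x) = toC (V t x)) ∧
        (∀ x : Spc D, H (toC x) = toC (W t x)) ∧
        ∀ z ∈ strip D (Real.sqrt t / (2 * C₄)),
          ‖F z‖ + ‖H z‖ ≤ 2 * β * C₄ * (supN V₀ + supN W₀)

/-- The magnetic-field bound property for the constant `C₃`. -/
def MagBound (D : ℕ) (ν μ : ℝ) (C₃ : ℝ) : Prop :=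
  ∀ (V₀ W₀ : Spc D → Spc D), MemLinf V₀ → MemLinf W₀ → DivFree V₀ → DivFree W₀ →
  ∀ T : ℝ, 0 < T → ∀ V W, MildMHD D ν μ V₀ W₀ (Set.Ioo 0 T) V W →
    ∀ t ∈ Set.Ioo (0 : ℝ) (min T (1 / (16 * C₃ ^ 2 * (stSup T V) ^ 2))),
      ∀ x, ‖W t x‖ ≤ 2 * C₃ * supN W₀

/-! ### Gaussians as test functions -/

/-- Gaussians beat polynomials, with an explicit constant. -/
lemma poly_mul_gauss_le (m : ℕ) {a r : ℝ} (ha : 0 < a) (hr : 0 ≤ r) :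
    (1 + r) ^ m * exp (-(a * r ^ 2)) ≤ exp ((m : ℝ) ^ 2 / (4 * a)) := by
  have h1 : (1 + r) ^ m ≤ exp (m * r) := by
    rw [Real.exp_nat_mul]
    exact pow_le_pow_left₀ (by positivity) (by linarith [Real.add_one_le_exp r]) m
  calc (1 + r) ^ m * exp (-(a * r ^ 2)) ≤ exp (m * r) * exp (-(a * r ^ 2)) := by gcongr
    _ = exp (m * r - a * r ^ 2) := by rw [← Real.exp_add]; ring_nf
    _ ≤ _ := by
      apply Real.exp_le_exp.2
      rw [le_div_iff₀ (by positivity)]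
      nlinarith [sq_nonneg ((m : ℝ) - 2 * a * r)]

lemma abs_coord_le (z : Spc D) (k : Fin D) : |z k| ≤ ‖z‖ := by
  simpa using PiLp.norm_apply_le z k

/-- The Gaussian `e^{-a|w-x|²}` as a Schwartz function. -/
lemma exists_schwartz_gauss {a : ℝ} (ha : 0 < a) (x : Spc D) :
    ∃ φ : SchwartzMap (Spc D) ℝ, ∀ w, φ w = exp (-(a * ‖w - x‖ ^ 2)) := by
  have hf : (fun w : Spc D => -(a * ‖w - x‖ ^ 2)).HasTemperateGrowth := by
    have h1 : (fun w : Spc D => ‖w - x‖ ^ 2).HasTemperateGrowth :=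
      (Function.hasTemperateGrowth_norm_sq (Spc D)).comp
        (Function.HasTemperateGrowth.id'.fun_sub (Function.HasTemperateGrowth.const x))
    exact ((Function.HasTemperateGrowth.const a).fun_mul h1).fun_neg
  refine ⟨⟨fun w => exp (-(a * ‖w - x‖ ^ 2)), Real.contDiff_exp.comp hf.1, ?_⟩, fun w => rfl⟩
  intro p n
  obtain ⟨k, C, hC, hb⟩ := hf.norm_iteratedFDeriv_le_uniform n
  refine ⟨(n.factorial : ℝ) * (C + 1) ^ n * (1 + ‖x‖) ^ (p + k * n)
    * exp (((p + k * n : ℕ) : ℝ) ^ 2 / (4 * a)), fun w => ?_⟩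
  have h1 : (1 : ℝ) ≤ (C + 1) * (1 + ‖w‖) ^ k := by
    have : (1 : ℝ) ≤ (1 + ‖w‖) ^ k := one_le_pow₀ (by linarith [norm_nonneg w])
    nlinarith
  have h2 := norm_iteratedFDeriv_comp_le (𝕜 := ℝ) (n := n) Real.contDiff_exp hf.1
    (by exact_mod_cast le_top) w (C := exp (-(a * ‖w - x‖ ^ 2)))
    (D := (C + 1) * (1 + ‖w‖) ^ k)
    (fun i _ => by
      rw [norm_iteratedFDeriv_eq_norm_iteratedDeriv, iteratedDeriv_eq_iterate,
        Real.iter_deriv_exp, Real.norm_eq_abs, abs_of_pos (exp_pos _)])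
    (fun i hi hin => by
      calc _ ≤ C * (1 + ‖w‖) ^ k := hb i hin w
        _ ≤ (C + 1) * (1 + ‖w‖) ^ k := by gcongr; linarith
        _ ≤ _ := le_self_pow₀ h1 (by omega))
  have h3 : 1 + ‖w‖ ≤ (1 + ‖x‖) * (1 + ‖w - x‖) := by
    have : ‖w‖ ≤ ‖w - x‖ + ‖x‖ := by simpa using norm_add_le (w - x) x
    nlinarith [norm_nonneg x, norm_nonneg (w - x)]
  have h4 := poly_mul_gauss_le (p + k * n) ha (norm_nonneg (w - x))
  calc ‖w‖ ^ p * ‖iteratedFDeriv ℝ n (fun w => exp (-(a * ‖w - x‖ ^ 2))) w‖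
      ≤ (1 + ‖w‖) ^ p * (n.factorial * exp (-(a * ‖w - x‖ ^ 2))
          * ((C + 1) * (1 + ‖w‖) ^ k) ^ n) := by
        gcongr
        · linarith
        · exact h2
    _ = n.factorial * (C + 1) ^ n * (1 + ‖w‖) ^ (p + k * n) * exp (-(a * ‖w - x‖ ^ 2)) := by
        rw [mul_pow, pow_add, pow_mul]; ring
    _ ≤ n.factorial * (C + 1) ^ n * ((1 + ‖x‖) * (1 + ‖w - x‖)) ^ (p + k * n)
          * exp (-(a * ‖w - x‖ ^ 2)) := by gcongr
    _ = n.factorial * (C + 1) ^ n * (1 + ‖x‖) ^ (p + k * n)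
          * ((1 + ‖w - x‖) ^ (p + k * n) * exp (-(a * ‖w - x‖ ^ 2))) := by
        rw [mul_pow]; ring
    _ ≤ _ := by gcongr

/-- The test function for the pressure equation: up to a constant factor, `∂_k` of a Gaussian. -/
def dg (a : ℝ) (x : Spc D) (k : Fin D) (w : Spc D) : ℝ :=
  (w k - x k) * exp (-(a * ‖w - x‖ ^ 2))

lemma exists_schwartz_dg {a : ℝ} (ha : 0 < a) (x : Spc D) (k : Fin D) :
    ∃ φ : SchwartzMap (Spc D) ℝ, ⇑φ = dg a x k := by
  obtain ⟨φ, hφ⟩ := exists_schwartz_gauss ha x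
  have hk : (fun w : Spc D => w k - x k).HasTemperateGrowth :=
    (EuclideanSpace.proj (𝕜 := ℝ) k : Spc D →L[ℝ] ℝ).hasTemperateGrowth.fun_sub
      (Function.HasTemperateGrowth.const (x k))
  refine ⟨SchwartzMap.smulLeftCLM ℝ (fun w : Spc D => w k - x k) φ, ?_⟩
  ext w
  rw [SchwartzMap.smulLeftCLM_apply_apply hk, hφ, dg, smul_eq_mul]

lemma hasFDerivAt_gauss (a : ℝ) (x w : Spc D) :
    HasFDerivAt (fun w : Spc D => exp (-(a * ‖w - x‖ ^ 2)))
      ((-(2 * a) * exp (-(a * ‖w - x‖ ^ 2))) • innerSL ℝ (w - x)) w := by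
  have h1 : HasFDerivAt (fun w : Spc D => ‖w - x‖ ^ 2) ((2 : ℝ) • innerSL ℝ (w - x)) w := by
    have := (hasStrictFDerivAt_norm_sq (w - x)).hasFDerivAt.comp w ((hasFDerivAt_id w).sub_const x)
    convert! this using 1
    ext v; simp [two_mul]
  convert! ((h1.const_mul a).neg).exp using 1
  ext v; simp; ring

lemma hasFDerivAt_coord (x w : Spc D) (k : Fin D) :
    HasFDerivAt (fun w : Spc D => w k - x k) (EuclideanSpace.proj (𝕜 := ℝ) k : Spc D →L[ℝ] ℝ) w :=
  ((EuclideanSpace.proj (𝕜 := ℝ) k : Spc D →L[ℝ] ℝ).hasFDerivAt).sub_const (x k)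

lemma pd_eq {f : Spc D → ℝ} {f' : Spc D →L[ℝ] ℝ} {w : Spc D} (h : HasFDerivAt f f' w)
    (j : Fin D) : pd j f w = f' (EuclideanSpace.single j 1) := by
  rw [pd, h.fderiv]

/-- Kronecker delta. -/
def kd (j k : Fin D) : ℝ := if j = k then 1 else 0

lemma proj_single (j k : Fin D) :
    (EuclideanSpace.proj (𝕜 := ℝ) k : Spc D →L[ℝ] ℝ) (EuclideanSpace.single j 1) = kd j k := by
  simp [kd, eq_comm]

lemma innerSL_single (z : Spc D) (j : Fin D) :
    innerSL ℝ z (EuclideanSpace.single j (1 : ℝ)) = z j := by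
  simp [EuclideanSpace.inner_single_right]

lemma pd_gauss (a : ℝ) (x w : Spc D) (j : Fin D) :
    pd j (fun w : Spc D => exp (-(a * ‖w - x‖ ^ 2))) w
      = -(2 * a) * (w j - x j) * exp (-(a * ‖w - x‖ ^ 2)) := by
  rw [pd_eq (hasFDerivAt_gauss a x w), _root_.smul_apply, innerSL_single]
  simp; ring

lemma pd_dg (a : ℝ) (x w : Spc D) (k l : Fin D) :
    pd l (dg a x k) w
      = (kd l k - 2 * a * ((w l - x l) * (w k - x k))) * exp (-(a * ‖w - x‖ ^ 2)) := by
  have h := (hasFDerivAt_coord x w k).mul (hasFDerivAt_gauss a x w)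
  have h2 := pd_eq h l
  simp only [_root_.add_apply, _root_.smul_apply, innerSL_single,
    proj_single] at h2
  refine h2.trans ?_
  simp; ring

lemma pd_pd_dg (a : ℝ) (x w : Spc D) (j k l : Fin D) :
    pd j (fun y => pd l (dg a x k) y) w
      = (-(2 * a) * (kd l k * (w j - x j) + kd j l * (w k - x k) + kd j k * (w l - x l))
          + 4 * a ^ 2 * ((w j - x j) * (w l - x l) * (w k - x k)))
        * exp (-(a * ‖w - x‖ ^ 2)) := by
  simp only [pd_dg]
  have h := ((((hasFDerivAt_coord x w l).mul (hasFDerivAt_coord x w k)).const_mul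
    (2 * a)).const_sub (kd l k)).mul (hasFDerivAt_gauss a x w)
  have h2 := pd_eq h j
  simp only [_root_.add_apply, _root_.smul_apply, innerSL_single,
    _root_.neg_apply, proj_single] at h2
  refine h2.trans ?_
  simp; ring

lemma lap_dg (a : ℝ) (x w : Spc D) (k : Fin D) :
    lap (dg a x k) w
      = (4 * a ^ 2 * ‖w - x‖ ^ 2 - 2 * a * (D + 2)) * dg a x k w := by
  simp only [lap, pd_pd_dg]
  have h1 : ‖w - x‖ ^ 2 = ∑ j, (w j - x j) ^ 2 := by
    rw [EuclideanSpace.norm_sq_eq]; simp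
  have h2 : ∑ j : Fin D, kd j k * (w j - x j) = w k - x k := by simp [kd]
  rw [dg, ← Finset.sum_mul, Finset.sum_add_distrib, ← Finset.mul_sum, ← Finset.mul_sum]
  have h3 : ∑ j : Fin D, (kd j k * (w j - x j) + kd j j * (w k - x k) + kd j k * (w j - x j))
      = (D + 2) * (w k - x k) := by
    rw [Finset.sum_add_distrib, Finset.sum_add_distrib, h2]
    simp [kd]; ring
  have h4 : ∑ j : Fin D, (w j - x j) * (w j - x j) * (w k - x k)
      = ‖w - x‖ ^ 2 * (w k - x k) := by
    rw [h1, Finset.sum_mul]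
    exact Finset.sum_congr rfl fun j _ => by ring
  rw [h3, h4]; ring

/-- Second derivatives of `dg`, i.e. third derivatives of a Gaussian, at the parabolic scale. -/
lemma abs_pd_pd_dg_le {a : ℝ} (ha : 0 < a) (x w : Spc D) (j k l : Fin D) :
    |pd j (fun y => pd l (dg a x k) y) w| ≤ 22 * √a * exp (-(a / 2 * ‖w - x‖ ^ 2)) := by
  have hkd : ∀ i j : Fin D, |kd i j| ≤ 1 := fun i j => by unfold kd; split_ifs <;> simp
  set z := ‖w - x‖ with hz
  have hz0 : 0 ≤ z := norm_nonneg _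
  have hc : ∀ i, |w i - x i| ≤ z := fun i => by simpa using abs_coord_le (w - x) i
  rw [pd_pd_dg, abs_mul, abs_of_pos (exp_pos _)]
  set s := √a with hs
  have hs0 : 0 < s := Real.sqrt_pos.2 ha
  have hsa : a = s ^ 2 := (Real.sq_sqrt ha.le).symm
  have hkc : ∀ i j l : Fin D, |kd i j * (w l - x l)| ≤ z := fun i j l => by
    rw [abs_mul]; nlinarith [hkd i j, hc l, abs_nonneg (kd i j), abs_nonneg (w l - x l)]
  have h1 : |(-(2 * a) * (kd l k * (w j - x j) + kd j l * (w k - x k) + kd j k * (w l - x l))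
          + 4 * a ^ 2 * ((w j - x j) * (w l - x l) * (w k - x k)))| ≤ 6 * a * z + 4 * a ^ 2 * z ^ 3 := by
    refine (abs_add_le _ _).trans ?_
    have e1 : |(-(2 * a) * (kd l k * (w j - x j) + kd j l * (w k - x k) + kd j k * (w l - x l)))|
        ≤ 2 * a * (z + z + z) := by
      rw [abs_mul, abs_neg, abs_of_pos (by positivity : 0 < 2 * a)]
      gcongr
      refine (abs_add_le _ _).trans (add_le_add ((abs_add_le _ _).trans (add_le_add ?_ ?_)) ?_)
      · exact hkc _ _ _
      · exact hkc _ _ _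
      · exact hkc _ _ _
    have e2 : |4 * a ^ 2 * ((w j - x j) * (w l - x l) * (w k - x k))| ≤ 4 * a ^ 2 * (z * z * z) := by
      rw [abs_mul, abs_of_pos (by positivity : 0 < 4 * a ^ 2), abs_mul, abs_mul]
      gcongr <;> exact hc _
    nlinarith
  -- with `r = √a |w - x|` the claim reads `(6 r + 4 r³) e^{-r²/2} ≤ 22`
  have h2 : 6 * a * z + 4 * a ^ 2 * z ^ 3 ≤ 22 * s * exp (a / 2 * z ^ 2) := by
    have hq := Real.quadratic_le_exp_of_nonneg (x := a / 2 * z ^ 2) (by positivity)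
    set r := s * z
    have hr : 0 ≤ r := by positivity
    have e : 6 * a * z + 4 * a ^ 2 * z ^ 3 = s * (6 * r + 4 * r ^ 3) := by
      rw [hsa]; simp only [r]; ring
    have e' : a / 2 * z ^ 2 = r ^ 2 / 2 := by rw [hsa]; simp only [r]; ring
    rw [e'] at hq ⊢
    rw [e, mul_comm 22 s, mul_assoc]
    gcongr
    nlinarith [sq_nonneg (r - 1), mul_nonneg hr (sq_nonneg (r - 1)), sq_nonneg (r ^ 2 - r), sq_nonneg r, sq_nonneg (r^2)]
  calc _ ≤ (22 * s * exp (a / 2 * z ^ 2)) * exp (-(a * z ^ 2)) := by gcongr; exact h1.trans h2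
    _ = 22 * s * (exp (a / 2 * z ^ 2) * exp (-(a * z ^ 2))) := by ring
    _ = _ := by rw [← Real.exp_add]; ring_nf

/-! ### Integrability of BMO functions against a weight -/

/-- Mean oscillation over a single ball, in integrated form. -/
lemma IsBMO.integral_ball_le {P : Spc D → ℝ} (hP : IsBMO P) (c : Spc D) {r : ℝ} (hr : 0 < r) :
    ∫ y in Metric.ball c r, |P y - ⨍ z in Metric.ball c r, P z|
      ≤ volume.real (Metric.ball c r) * bmoNorm P := by
  have h := le_csSup hP.2 (show _ ∈ oscSet P from ⟨c, r, hr, rfl⟩)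
  have hv : 0 < volume.real (Metric.ball c r) :=
    ENNReal.toReal_pos (Metric.measure_ball_pos _ _ hr).ne' measure_ball_lt_top.ne
  rw [setAverage_eq, smul_eq_mul, inv_mul_le_iff₀ hv] at h
  exact h

lemma bmoNorm_nonneg {P : Spc D → ℝ} : 0 ≤ bmoNorm P := by
  apply Real.sSup_nonneg
  rintro v ⟨c, r, hr, rfl⟩
  rw [setAverage_eq]
  exact smul_nonneg (by positivity) (integral_nonneg fun _ => abs_nonneg _)

lemma integrableOn_ball {P : Spc D → ℝ} (hP : LocallyIntegrable P volume) (c : Spc D) (r : ℝ) :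
    IntegrableOn P (Metric.ball c r) :=
  (hP.integrableOn_isCompact (isCompact_closedBall c r)).mono_set Metric.ball_subset_closedBall

lemma volume_real_dyadic (c : Spc D) (m : ℕ) :
    volume.real (Metric.ball c (2 ^ m)) = 2 ^ (m * D) * volume.real (Metric.ball (0 : Spc D) 1) := by
  rw [measureReal_def, Measure.addHaar_ball_of_pos _ _ (by positivity), ENNReal.toReal_mul,
    ENNReal.toReal_ofReal (by positivity), finrank_euclideanSpace_fin, ← pow_mul]
  rfl

/-- Averages of a BMO function over dyadic concentric balls grow at most linearly in the
logarithm of the radius. -/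
lemma IsBMO.abs_average_le {P : Spc D → ℝ} (hP : IsBMO P) (c : Spc D) (m : ℕ) :
    |⨍ z in Metric.ball c (2 ^ m), P z|
      ≤ |⨍ z in Metric.ball c (2 ^ 0), P z| + m * (2 ^ D * bmoNorm P) := by
  induction m with
  | zero => simp
  | succ m ih =>
    set V := volume.real (Metric.ball (0 : Spc D) 1) with hV
    have hVp : 0 < V :=
      ENNReal.toReal_pos (Metric.measure_ball_pos _ _ one_pos).ne' measure_ball_lt_top.ne
    set c1 := ⨍ z in Metric.ball c (2 ^ (m + 1)), P z with hc1
    have hI := integrableOn_ball hP.1 c (2 ^ m)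
    have hI1 := integrableOn_ball hP.1 c (2 ^ (m + 1))
    have hsub : Metric.ball c ((2 : ℝ) ^ m) ⊆ Metric.ball c (2 ^ (m + 1)) :=
      Metric.ball_subset_ball (by gcongr <;> norm_num)
    have hfin : ∀ r : ℝ, IntegrableOn (fun _ : Spc D => c1) (Metric.ball c r) := fun r =>
      integrableOn_const measure_ball_lt_top.ne
    have hvm : 0 < volume.real (Metric.ball c ((2 : ℝ) ^ m)) := by
      rw [volume_real_dyadic]; positivity
    have h1 : (⨍ z in Metric.ball c (2 ^ m), P z) - c1
        = (volume.real (Metric.ball c ((2 : ℝ) ^ m)))⁻¹ * ∫ z in Metric.ball c (2 ^ m), (P z - c1) := by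
      rw [integral_sub hI (hfin _), setAverage_eq, setIntegral_const, smul_eq_mul, smul_eq_mul]
      field_simp
    have h2 : |∫ z in Metric.ball c (2 ^ m), (P z - c1)|
        ≤ volume.real (Metric.ball c ((2 : ℝ) ^ (m + 1))) * bmoNorm P := by
      refine (abs_integral_le_integral_abs).trans (le_trans ?_ (hP.integral_ball_le c (by positivity)))
      exact setIntegral_mono_set ((hI1.sub (hfin _)).abs) (ae_of_all _ fun _ => abs_nonneg _)
        (hsub.eventuallyLE)
    have h3 : |(⨍ z in Metric.ball c (2 ^ m), P z) - c1| ≤ 2 ^ D * bmoNorm P := by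
      rw [h1, abs_mul, abs_of_pos (inv_pos.2 hvm), inv_mul_le_iff₀ hvm]
      refine h2.trans (le_of_eq ?_)
      rw [volume_real_dyadic, volume_real_dyadic, add_mul, pow_add]; ring
    have h4 := abs_sub_abs_le_abs_sub c1 (⨍ z in Metric.ball c (2 ^ m), P z)
    rw [abs_sub_comm] at h4
    push_cast
    linarith

/-- A BMO function is integrable against the weight `(1 + |w - x|)^{-(D+1)}`. -/
lemma IsBMO.integrable_weight {P : Spc D → ℝ} (hP : IsBMO P) (x : Spc D) :
    Integrable (fun w => P w * ((1 + ‖w - x‖) ^ (D + 1))⁻¹) := by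
  set A : ℕ → Set (Spc D) := fun i => {w | 2 ^ i ≤ 1 + ‖w - x‖ ∧ 1 + ‖w - x‖ < 2 ^ (i + 1)} with hA
  have hU : (⋃ i, A i) = univ := by
    refine eq_univ_of_forall fun w => mem_iUnion.2 ?_
    exact exists_nat_pow_near (by linarith [norm_nonneg (w - x)]) (by norm_num)
  rw [← integrableOn_univ, ← hU]
  have hAm : ∀ i, MeasurableSet (A i) := fun i =>
    ((measurableSet_le measurable_const (by fun_prop : Measurable fun w : Spc D => 1 + ‖w - x‖))).inter
      (measurableSet_lt (by fun_prop : Measurable fun w : Spc D => 1 + ‖w - x‖) measurable_const)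
  have hAb : ∀ i, A i ⊆ Metric.ball x (2 ^ (i + 1)) := fun i w hw => by
    rw [Metric.mem_ball, dist_eq_norm]; linarith [hw.2]
  have hIA : ∀ i, IntegrableOn P (A i) := fun i => (integrableOn_ball hP.1 x _).mono_set (hAb i)
  have hmeas : AEStronglyMeasurable (fun w : Spc D => ((1 + ‖w - x‖) ^ (D + 1))⁻¹) volume := by
    have : Measurable (fun w : Spc D => ((1 + ‖w - x‖) ^ (D + 1))⁻¹) := by fun_prop
    exact this.aestronglyMeasurable
  have hb : ∀ i, ∀ w ∈ A i, ‖P w * ((1 + ‖w - x‖) ^ (D + 1))⁻¹‖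
      ≤ ((2 : ℝ) ^ (i * (D + 1)))⁻¹ * |P w| := fun i w hw => by
    rw [norm_mul, mul_comm, Real.norm_eq_abs, Real.norm_eq_abs, abs_of_nonneg (by positivity)]
    gcongr
    rw [pow_mul]
    gcongr
    exact hw.1
  have hIf : ∀ i, IntegrableOn (fun w => P w * ((1 + ‖w - x‖) ^ (D + 1))⁻¹) (A i) := fun i =>
    ((hIA i).abs.const_mul _).mono' ((hIA i).1.mul hmeas.restrict)
      ((ae_restrict_iff' (hAm i)).2 (ae_of_all _ (hb i)))
  refine integrableOn_iUnion_of_summable_integral_norm hIf ?_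
  set V := volume.real (Metric.ball (0 : Spc D) 1) with hV
  set c0 := |⨍ z in Metric.ball x (2 ^ 0), P z|
  set β := bmoNorm P
  have hβ : 0 ≤ β := bmoNorm_nonneg
  have hball : ∀ m : ℕ, ∫ w in Metric.ball x (2 ^ m), |P w|
      ≤ 2 ^ (m * D) * V * (β + (c0 + m * (2 ^ D * β))) := fun m => by
    set cm := ⨍ z in Metric.ball x (2 ^ m), P z with hcm
    have hI := integrableOn_ball hP.1 x (2 ^ m)
    have hfin : ∀ b : ℝ, IntegrableOn (fun _ : Spc D => b) (Metric.ball x (2 ^ m)) := fun b =>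
      integrableOn_const measure_ball_lt_top.ne
    calc ∫ w in Metric.ball x (2 ^ m), |P w|
        ≤ ∫ w in Metric.ball x (2 ^ m), (|P w - cm| + |cm|) := by
          refine integral_mono hI.abs ((hI.sub (hfin _)).abs.add (hfin _)) fun w => ?_
          simpa using abs_add_le (P w - cm) cm
      _ = (∫ w in Metric.ball x (2 ^ m), |P w - cm|)
            + volume.real (Metric.ball x ((2 : ℝ) ^ m)) * |cm| := by
          rw [integral_add (by exact (hI.sub (hfin _)).abs) (hfin _), setIntegral_const, smul_eq_mul]
      _ ≤ volume.real (Metric.ball x ((2 : ℝ) ^ m)) * β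
            + volume.real (Metric.ball x ((2 : ℝ) ^ m)) * (c0 + m * (2 ^ D * β)) := by
          gcongr
          · exact hP.integral_ball_le x (by positivity)
          · exact hP.abs_average_le x m
      _ = _ := by rw [volume_real_dyadic]; ring
  have hle : ∀ i : ℕ, ∫ w in A i, ‖P w * ((1 + ‖w - x‖) ^ (D + 1))⁻¹‖
      ≤ 2 ^ D * V * (β + c0 + 2 ^ D * β) * (1 / 2) ^ i
        + 2 ^ D * V * (2 ^ D * β) * ((i : ℝ) ^ 1 * (1 / 2) ^ i) := fun i => by
    calc ∫ w in A i, ‖P w * ((1 + ‖w - x‖) ^ (D + 1))⁻¹‖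
        ≤ ∫ w in A i, ((2 : ℝ) ^ (i * (D + 1)))⁻¹ * |P w| :=
          setIntegral_mono_on (hIf i).norm ((hIA i).abs.const_mul _) (hAm i) (hb i)
      _ = ((2 : ℝ) ^ (i * (D + 1)))⁻¹ * ∫ w in A i, |P w| := integral_const_mul _ _
      _ ≤ ((2 : ℝ) ^ (i * (D + 1)))⁻¹ * ∫ w in Metric.ball x (2 ^ (i + 1)), |P w| := by
          refine mul_le_mul_of_nonneg_left ?_ (by positivity)
          exact setIntegral_mono_set (integrableOn_ball hP.1 x _).abs
            (ae_of_all _ fun _ => abs_nonneg _) (hAb i).eventuallyLE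
      _ ≤ ((2 : ℝ) ^ (i * (D + 1)))⁻¹ * (2 ^ ((i + 1) * D) * V
            * (β + (c0 + (i + 1 : ℕ) * (2 ^ D * β)))) := by
          gcongr; exact hball (i + 1)
      _ = _ := by
          have : ((2 : ℝ) ^ (i * (D + 1)))⁻¹ * 2 ^ ((i + 1) * D) = 2 ^ D * (1 / 2) ^ i := by
            rw [one_div, inv_pow, mul_add, add_mul, pow_add, pow_add, one_mul, mul_one]
            field_simp
          push_cast
          linear_combination (V * (β + (c0 + (i + 1) * (2 ^ D * β)))) * this
  refine Summable.of_nonneg_of_le (fun i => integral_nonneg fun _ => norm_nonneg _) hle ?_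
  refine Summable.add (Summable.mul_left _ ?_) (Summable.mul_left _ ?_)
  · exact summable_geometric_of_lt_one (by norm_num) (by norm_num)
  · exact summable_pow_mul_geometric_of_norm_lt_one 1 (by norm_num)

/-! ### The pressure estimate -/

lemma integrable_gauss {b : ℝ} (hb : 0 < b) (x : Spc D) :
    Integrable (fun w : Spc D => exp (-(b * ‖w - x‖ ^ 2))) := by
  obtain ⟨φ, hφ⟩ := exists_schwartz_gauss hb x
  exact φ.integrable.congr (ae_of_all _ hφ)

lemma integral_gauss {b : ℝ} (hb : 0 < b) (x : Spc D) :
    ∫ w : Spc D, exp (-(b * ‖w - x‖ ^ 2)) = (π / b) ^ ((D : ℝ) / 2) := by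
  rw [integral_sub_right_eq_self (fun z : Spc D => exp (-(b * ‖z‖ ^ 2))) x]
  have := GaussianFourier.integral_rexp_neg_mul_sq_norm (V := Spc D) hb
  simpa [neg_mul] using this

/-- The normalisation of the Gaussian `e^{-a|z|²}` on `ℝ^D`; the heat kernel is
`nrm D a * e^{-a|z|²}` with `a = 1/(4λt)`. -/
def nrm (D : ℕ) (a : ℝ) : ℝ := (a / π) ^ ((D : ℝ) / 2)

lemma nrm_pos (D : ℕ) {a : ℝ} (ha : 0 < a) : 0 < nrm D a := by unfold nrm; positivity

lemma nrm_mul_half (D : ℕ) {a : ℝ} (ha : 0 < a) :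
    nrm D a * (π / (a / 2)) ^ ((D : ℝ) / 2) = 2 ^ ((D : ℝ) / 2) := by
  rw [nrm, ← Real.mul_rpow (by positivity) (by positivity)]
  congr 1; field_simp

lemma nrm_mul_self (D : ℕ) {a : ℝ} (ha : 0 < a) :
    nrm D a * (π / a) ^ ((D : ℝ) / 2) = 1 := by
  rw [nrm, ← Real.mul_rpow (by positivity) (by positivity)]
  rw [show a / π * (π / a) = 1 by field_simp, Real.one_rpow]

/-- The function `w ↦ ∂_k G(x - w)` for the heat kernel `G` with parameter `a = 1/(4λt)`. -/
def dG (a : ℝ) (x : Spc D) (k : Fin D) (w : Spc D) : ℝ := 2 * a * nrm D a * dg a x k w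

lemma continuous_dg (a : ℝ) (x : Spc D) (k : Fin D) : Continuous (dg a x k) := by
  unfold dg; fun_prop

lemma abs_dg_le (a : ℝ) (x w : Spc D) (k : Fin D) :
    |dg a x k w| ≤ ‖w - x‖ * exp (-(a * ‖w - x‖ ^ 2)) := by
  rw [dg, abs_mul, abs_of_pos (exp_pos _)]
  gcongr
  simpa using abs_coord_le (w - x) k

/-- The first derivative of the heat kernel at the parabolic scale. -/
lemma abs_dG_le {a : ℝ} (ha : 0 < a) (x w : Spc D) (k : Fin D) :
    |dG a x k w| ≤ 2 * √a * nrm D a * exp (-(a / 2 * ‖w - x‖ ^ 2)) := by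
  have hn := nrm_pos D ha
  rw [dG, abs_mul, abs_of_pos (by positivity)]
  have hz := norm_nonneg (w - x)
  set z := ‖w - x‖
  have hs0 : 0 < √a := Real.sqrt_pos.2 ha
  have hsa : a = √a ^ 2 := (Real.sq_sqrt ha.le).symm
  have h1 : √a * z ≤ exp (a / 2 * z ^ 2) := by
    have := Real.add_one_le_exp (a / 2 * z ^ 2)
    nlinarith [sq_nonneg (√a * z - 1)]
  have h2 : a * (z * exp (-(a * z ^ 2))) ≤ √a * exp (-(a / 2 * z ^ 2)) := by
    calc a * (z * exp (-(a * z ^ 2))) = √a * ((√a * z) * exp (-(a * z ^ 2))) := by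
          nth_rewrite 1 [hsa]; ring
      _ ≤ √a * (exp (a / 2 * z ^ 2) * exp (-(a * z ^ 2))) := by gcongr
      _ = _ := by rw [← Real.exp_add]; ring_nf
  calc 2 * a * nrm D a * |dg a x k w| ≤ 2 * a * nrm D a * (z * exp (-(a * z ^ 2))) := by
        gcongr; exact abs_dg_le a x w k
    _ = 2 * nrm D a * (a * (z * exp (-(a * z ^ 2)))) := by ring
    _ ≤ 2 * nrm D a * (√a * exp (-(a / 2 * z ^ 2))) := by gcongr
    _ = _ := by ring

/-- Bound of `dG` by the BMO weight, uniform for small `a`. -/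
lemma abs_dG_le_weight {a : ℝ} (ha : 0 < a) (ha1 : a ≤ 1) (x w : Spc D) (k : Fin D) :
    |dG a x k w| ≤ 2 * exp (((D + 2 : ℕ) : ℝ) ^ 2 / (4 * 1)) * ((1 + ‖w - x‖) ^ (D + 1))⁻¹ := by
  have hn := nrm_pos D ha
  have hn2 : nrm D a ≤ √a ^ D := by
    rw [nrm, Real.sqrt_eq_rpow, ← Real.rpow_natCast, ← Real.rpow_mul ha.le,
      show (1 / 2 * (D : ℝ)) = (D : ℝ) / 2 by ring]
    apply Real.rpow_le_rpow (by positivity) _ (by positivity)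
    exact div_le_self ha.le (by linarith [Real.pi_gt_three])
  rw [dG, abs_mul, abs_of_pos (by positivity), ← div_eq_mul_inv, le_div_iff₀ (by positivity)]
  have hz := norm_nonneg (w - x)
  have hdg := abs_dg_le a x w k
  set z := ‖w - x‖
  set s := √a
  have hs0 : 0 < s := Real.sqrt_pos.2 ha
  have hs1 : s ≤ 1 := Real.sqrt_le_one.2 ha1
  have hsa : a = s ^ 2 := (Real.sq_sqrt ha.le).symm
  have hp := poly_mul_gauss_le (D + 2) one_pos (show 0 ≤ s * z by positivity)
  calc 2 * a * nrm D a * |dg a x k w| * (1 + z) ^ (D + 1)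
      ≤ 2 * a * s ^ D * (z * exp (-(a * z ^ 2))) * (1 + z) ^ (D + 1) := by gcongr
    _ = 2 * ((s * z) * (s + s * z) ^ (D + 1) * exp (-(1 * (s * z) ^ 2))) := by
        rw [show s + s * z = s * (1 + z) by ring, mul_pow s (1 + z), hsa]; ring_nf
    _ ≤ 2 * ((1 + s * z) * (1 + s * z) ^ (D + 1) * exp (-(1 * (s * z) ^ 2))) := by
        gcongr; linarith
    _ = 2 * ((1 + s * z) ^ (D + 2) * exp (-(1 * (s * z) ^ 2))) := by ring
    _ ≤ _ := by gcongr

/-- The heat equation for `∂_k G`, written in the variable `a = 1/(4λt)`. -/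
lemma hasDerivAt_dG {a : ℝ} (ha : 0 < a) (x w : Spc D) (k : Fin D) :
    HasDerivAt (fun a => dG a x k w) (-(nrm D a / (2 * a)) * lap (dg a x k) w) a := by
  have h1 : HasDerivAt (fun a : ℝ => nrm D a) ((D : ℝ) / 2 * nrm D a / a) a := by
    have := ((hasDerivAt_id a).div_const π).rpow_const (p := (D : ℝ) / 2)
      (Or.inl (div_pos ha Real.pi_pos).ne')
    convert! this using 1
    rw [id, Real.rpow_sub_one (by positivity), nrm]
    field_simp
  have h2 : HasDerivAt (fun a : ℝ => dg a x k w) (-(‖w - x‖ ^ 2) * dg a x k w) a := by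
    have := (((hasDerivAt_id a).mul_const (‖w - x‖ ^ 2)).neg.exp).const_mul (w k - x k)
    convert! this using 1
    simp [dg]; ring
  have h3 := (((hasDerivAt_id a).const_mul 2).mul h1).mul h2
  convert! h3 using 1
  rw [lap_dg]
  simp
  field_simp
  ring

/-- Local domination of the derivative in `hasDerivAt_dG` by the BMO weight. -/
lemma exists_deriv_dG_bound {a : ℝ} (ha : 0 < a) (x : Spc D) (k : Fin D) :
    ∃ C : ℝ, ∀ b ∈ Ioo (a / 2) (2 * a), ∀ w,
      |-(nrm D b / (2 * b)) * lap (dg b x k) w| ≤ C * ((1 + ‖w - x‖) ^ (D + 1))⁻¹ := by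
  refine ⟨nrm D (2 * a) / a * (16 * a ^ 2 + 4 * a * (D + 2))
    * exp (((D + 4 : ℕ) : ℝ) ^ 2 / (4 * (a / 2))), fun b hb w => ?_⟩
  have hb0 : 0 < b := by linarith [hb.1]
  rw [lap_dg, ← div_eq_mul_inv, le_div_iff₀ (by positivity)]
  have hn : nrm D b ≤ nrm D (2 * a) := by
    unfold nrm
    have := hb.2.le
    gcongr
  have hnb := nrm_pos D hb0
  have hz := norm_nonneg (w - x)
  have hdg := abs_dg_le b x w k
  have hp := poly_mul_gauss_le (D + 4) (half_pos ha) hz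
  set z := ‖w - x‖
  have h1 : |4 * b ^ 2 * z ^ 2 - 2 * b * (D + 2)| ≤ (16 * a ^ 2 + 4 * a * (D + 2)) * (1 + z) ^ 2 := by
    have e1 : 4 * b ^ 2 * z ^ 2 ≤ 16 * a ^ 2 * (1 + z) ^ 2 := by
      have : 4 * b ^ 2 ≤ 16 * a ^ 2 := by nlinarith [hb.2]
      gcongr
      linarith
    have e2 : 2 * b * (D + 2) ≤ 4 * a * (D + 2) * (1 + z) ^ 2 := by
      have h : 2 * b * ((D : ℝ) + 2) ≤ 4 * a * (D + 2) := by
        have := hb.2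
        have hD : (0 : ℝ) ≤ (D : ℝ) + 2 := by positivity
        exact mul_le_mul_of_nonneg_right (by linarith) hD
      have : (1 : ℝ) ≤ (1 + z) ^ 2 := by nlinarith
      calc _ ≤ 4 * a * ((D : ℝ) + 2) := h
        _ ≤ _ := le_mul_of_one_le_right (by positivity) this
    have e3 : 0 ≤ 4 * b ^ 2 * z ^ 2 := by positivity
    have e4 : 0 ≤ 2 * b * ((D : ℝ) + 2) := by positivity
    rw [abs_le]; constructor <;> linarith
  have h2 : |dg b x k w| ≤ (1 + z) * exp (-(a / 2 * z ^ 2)) := by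
    refine hdg.trans ?_
    have := hb.1.le
    gcongr
    linarith
  have h3 : nrm D b / (2 * b) ≤ nrm D (2 * a) / a := by
    have := hb.1
    gcongr
    · exact (nrm_pos D (by positivity)).le
    · linarith
  calc |-(nrm D b / (2 * b)) * ((4 * b ^ 2 * z ^ 2 - 2 * b * (D + 2)) * dg b x k w)| * (1 + z) ^ (D + 1)
      = nrm D b / (2 * b) * (|4 * b ^ 2 * z ^ 2 - 2 * b * (D + 2)| * |dg b x k w|) * (1 + z) ^ (D + 1) := by
        rw [abs_mul, abs_mul, abs_neg, abs_of_pos (by positivity : 0 < nrm D b / (2 * b))]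
    _ ≤ nrm D (2 * a) / a * (((16 * a ^ 2 + 4 * a * (D + 2)) * (1 + z) ^ 2)
          * ((1 + z) * exp (-(a / 2 * z ^ 2)))) * (1 + z) ^ (D + 1) := by
        have : 0 ≤ nrm D (2 * a) / a := (by positivity : 0 ≤ nrm D b / (2 * b)).trans h3
        gcongr
    _ = nrm D (2 * a) / a * (16 * a ^ 2 + 4 * a * (D + 2))
          * ((1 + z) ^ (D + 4) * exp (-(a / 2 * z ^ 2))) := by ring
    _ ≤ _ := by
        have := (nrm_pos D (by positivity : 0 < 2 * a)).le
        gcongr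

/-- Integrability against a BMO function follows from domination by the weight. -/
lemma IsBMO.integrable_mul {P : Spc D → ℝ} (hP : IsBMO P) (x : Spc D) {f : Spc D → ℝ}
    (hf : Continuous f) {C : ℝ} (hC : ∀ w, |f w| ≤ C * ((1 + ‖w - x‖) ^ (D + 1))⁻¹) :
    Integrable (fun w => f w * P w) := by
  refine ((hP.integrable_weight x).abs.const_mul C).mono'
    (hf.aestronglyMeasurable.mul hP.1.aestronglyMeasurable) (ae_of_all _ fun w => ?_)
  rw [norm_mul, Real.norm_eq_abs, Real.norm_eq_abs, abs_mul,
    abs_of_nonneg (by positivity : 0 ≤ ((1 + ‖w - x‖) ^ (D + 1))⁻¹)]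
  calc |f w| * |P w| ≤ C * ((1 + ‖w - x‖) ^ (D + 1))⁻¹ * |P w| := by gcongr; exact hC w
    _ = _ := by ring

lemma exists_dG_bound {a : ℝ} (ha : 0 < a) (x : Spc D) (k : Fin D) :
    ∃ C : ℝ, ∀ w, |dG a x k w| ≤ C * ((1 + ‖w - x‖) ^ (D + 1))⁻¹ := by
  refine ⟨2 * √a * nrm D a * exp (((D + 1 : ℕ) : ℝ) ^ 2 / (4 * (a / 2))), fun w => ?_⟩
  have hn := nrm_pos D ha
  refine (abs_dG_le ha x w k).trans ?_
  rw [← div_eq_mul_inv, le_div_iff₀ (by positivity), mul_assoc (2 * √a * nrm D a)]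
  gcongr
  rw [mul_comm]
  exact poly_mul_gauss_le (D + 1) (half_pos ha) (norm_nonneg _)

lemma continuous_lap_dg (a : ℝ) (x : Spc D) (k : Fin D) : Continuous (lap (dg a x k)) := by
  have : lap (dg a x k) = fun w => (4 * a ^ 2 * ‖w - x‖ ^ 2 - 2 * a * (D + 2)) * dg a x k w :=
    funext fun w => lap_dg a x w k
  rw [this]
  have := continuous_dg a x k
  fun_prop

lemma hasDerivAt_integral_dG {P : Spc D → ℝ} (hP : IsBMO P) (x : Spc D) (k : Fin D)
    {a : ℝ} (ha : 0 < a) :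
    HasDerivAt (fun a => ∫ w, dG a x k w * P w)
      (∫ w, -(nrm D a / (2 * a)) * lap (dg a x k) w * P w) a := by
  obtain ⟨C, hC⟩ := exists_deriv_dG_bound ha x k
  obtain ⟨C', hC'⟩ := exists_dG_bound ha x k
  have hcont : ∀ b, Continuous (dG b x k) := fun b => (continuous_dg b x k).const_mul _
  refine (hasDerivAt_integral_of_dominated_loc_of_deriv_le
    (s := Ioo (a / 2) (2 * a)) (Ioo_mem_nhds (by linarith) (by linarith))
    (F := fun a w => dG a x k w * P w)
    (F' := fun a w => -(nrm D a / (2 * a)) * lap (dg a x k) w * P w)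
    (bound := fun w => C * |P w * ((1 + ‖w - x‖) ^ (D + 1))⁻¹|)
    (Filter.Eventually.of_forall fun b =>
      (hcont b).aestronglyMeasurable.mul hP.1.aestronglyMeasurable)
    (hP.integrable_mul x (hcont a) hC')
    (((continuous_lap_dg a x k).const_mul _).aestronglyMeasurable.mul hP.1.aestronglyMeasurable)
    (ae_of_all _ fun w b hb => ?_) ((hP.integrable_weight x).abs.const_mul C)
    (ae_of_all _ fun w b hb => ?_)).2
  · rw [norm_mul, Real.norm_eq_abs, Real.norm_eq_abs, abs_mul (P w),
      abs_of_nonneg (by positivity : 0 ≤ ((1 + ‖w - x‖) ^ (D + 1))⁻¹)]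
    calc _ ≤ C * ((1 + ‖w - x‖) ^ (D + 1))⁻¹ * |P w| := by gcongr; exact hC b hb w
      _ = _ := by ring
  · exact (hasDerivAt_dG (by linarith [hb.1]) x w k).mul_const _

open Filter Topology in
/-- Large-time decay of `∂_k G * P` for `P` in BMO (large times are small `a`). -/
lemma tendsto_integral_dG {P : Spc D → ℝ} (hP : IsBMO P) (x : Spc D) (k : Fin D) :
    Tendsto (fun a => ∫ w, dG a x k w * P w) (𝓝[>] 0) (𝓝 0) := by
  have h0 : ∫ _ : Spc D, (0 : ℝ) = 0 := by simp
  suffices key : Tendsto (fun a : ℝ => ∫ w, dG a x k w * P w) (𝓝[>] 0)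
      (𝓝 (∫ _ : Spc D, (0 : ℝ))) by rwa [h0] at key
  refine tendsto_integral_filter_of_dominated_convergence
    (fun w => 2 * exp (((D + 2 : ℕ) : ℝ) ^ 2 / (4 * 1)) * |P w * ((1 + ‖w - x‖) ^ (D + 1))⁻¹|)
    (Eventually.of_forall fun b =>
      ((continuous_dg b x k).const_mul _).aestronglyMeasurable.mul hP.1.aestronglyMeasurable)
    ?_ ((hP.integrable_weight x).abs.const_mul _) (ae_of_all _ fun w => ?_)
  · filter_upwards [Ioc_mem_nhdsGT (zero_lt_one' ℝ)] with b hb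
    refine ae_of_all _ fun w => ?_
    rw [norm_mul, Real.norm_eq_abs, Real.norm_eq_abs, abs_mul (P w),
      abs_of_nonneg (by positivity : 0 ≤ ((1 + ‖w - x‖) ^ (D + 1))⁻¹)]
    calc _ ≤ _ * |P w| := mul_le_mul_of_nonneg_right (abs_dG_le_weight hb.1 hb.2 x w k) (abs_nonneg _)
      _ = _ := by ring
  · have hc : Continuous fun a : ℝ => dG a x k w * P w := by
      unfold dG nrm dg
      have : Continuous fun a : ℝ => (a / π) ^ ((D : ℝ) / 2) :=
        (Real.continuous_rpow_const (by positivity)).comp (continuous_id.div_const π)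
      fun_prop
    exact (hc.tendsto' 0 0 (by simp [dG])).mono_left nhdsWithin_le_nhds

open Filter Topology in
/-- Integration of a one-sided differential inequality from `0`. -/
lemma le_of_deriv_le {F F' : ℝ → ℝ} {L : ℝ}
    (hF : ∀ a, 0 < a → HasDerivAt F (F' a) a) (hb : ∀ a, 0 < a → F' a ≤ L / √a)
    (hlim : Tendsto F (𝓝[>] 0) (𝓝 0)) {a : ℝ} (ha : 0 < a) : F a ≤ 2 * L * √a := by
  have hd : ∀ b, 0 < b → HasDerivAt (fun b => F b - 2 * L * √b) (F' b - 2 * L * (1 / (2 * √b))) b :=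
    fun b hb => (hF b hb).sub ((Real.hasDerivAt_sqrt hb.ne').const_mul _)
  have hanti : AntitoneOn (fun b => F b - 2 * L * √b) (Ioi 0) := by
    refine antitoneOn_of_deriv_nonpos (convex_Ioi 0)
      (fun b hb => (hd b hb).continuousAt.continuousWithinAt)
      (fun b hb => (hd b (interior_subset hb)).differentiableAt.differentiableWithinAt)
      fun b hb' => ?_
    have hb0 : 0 < b := interior_subset hb'
    rw [(hd b hb0).deriv]
    have e : 2 * L * (1 / (2 * √b)) = L / √b := by
      have := (Real.sqrt_pos.2 hb0).ne'
      field_simp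
    rw [e]; linarith [hb b hb0]
  have hlim2 : Tendsto (fun b => F b - 2 * L * √b) (𝓝[>] 0) (𝓝 0) := by
    have h2 : Tendsto (fun b : ℝ => 2 * L * √b) (𝓝[>] 0) (𝓝 0) :=
      ((by fun_prop : Continuous fun b : ℝ => 2 * L * √b).tendsto' 0 0 (by simp)).mono_left
        nhdsWithin_le_nhds
    simpa using hlim.sub h2
  have : F a - 2 * L * √a ≤ 0 := by
    refine ge_of_tendsto hlim2 ?_
    filter_upwards [Ioc_mem_nhdsGT ha] with b hb
    exact hanti hb.1 ha hb.2
  linarith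

/-- The pressure estimate: for a BMO solution of `ΔP = -∂_j∂_l g_{jl}` with `|g| ≤ M`,
`|∂_k G * P| ≤ C(D) M √a`, where `a = 1/(4λt)`. The size of the BMO norm of `P` is immaterial. -/
lemma pressure_bound {P : Spc D → ℝ} (hP : IsBMO P) {g : Fin D → Fin D → Spc D → ℝ}
    (hS : SolvesPoisson D P g) {M : ℝ} (hg : ∀ j l w, |g j l w| ≤ M) (x : Spc D) (k : Fin D)
    {a : ℝ} (ha : 0 < a) :
    |∫ w, dG a x k w * P w| ≤ 2 * (11 * 2 ^ ((D : ℝ) / 2) * D ^ 2 * M) * √a := by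
  have hM : 0 ≤ M := (abs_nonneg _).trans (hg k k x)
  have key : ∀ b, 0 < b → |∫ w, -(nrm D b / (2 * b)) * lap (dg b x k) w * P w|
      ≤ 11 * 2 ^ ((D : ℝ) / 2) * D ^ 2 * M / √b := fun b hb => by
    have hn := nrm_pos D hb
    obtain ⟨φ, hφ⟩ := exists_schwartz_dg hb x k
    have hs := hS φ
    rw [hφ] at hs
    have e1 : ∫ w, -(nrm D b / (2 * b)) * lap (dg b x k) w * P w
        = -(nrm D b / (2 * b)) * ∫ w, P w * lap (dg b x k) w := by
      rw [← integral_const_mul]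
      exact integral_congr_ae (ae_of_all _ fun w => by ring)
    have e2 : ∀ j l, |∫ w, g j l w * pd j (fun y => pd l (dg b x k) y) w|
        ≤ M * (22 * √b) * (π / (b / 2)) ^ ((D : ℝ) / 2) := fun j l => by
      rw [← integral_gauss (half_pos hb) x, ← integral_const_mul, ← Real.norm_eq_abs]
      refine norm_integral_le_of_norm_le ((integrable_gauss (half_pos hb) x).const_mul _)
        (ae_of_all _ fun w => ?_)
      rw [norm_mul, Real.norm_eq_abs, Real.norm_eq_abs, mul_assoc M]
      exact mul_le_mul (hg j l w) (abs_pd_pd_dg_le hb x w j k l) (abs_nonneg _) hM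
    rw [e1, hs, abs_mul, abs_neg, abs_neg, abs_of_pos (by positivity : 0 < nrm D b / (2 * b))]
    calc _ ≤ nrm D b / (2 * b) * ∑ _j : Fin D, ∑ _l : Fin D,
            M * (22 * √b) * (π / (b / 2)) ^ ((D : ℝ) / 2) := by
          gcongr
          refine (Finset.abs_sum_le_sum_abs _ _).trans (Finset.sum_le_sum fun j _ => ?_)
          exact (Finset.abs_sum_le_sum_abs _ _).trans (Finset.sum_le_sum fun l _ => e2 j l)
      _ = 11 * (nrm D b * (π / (b / 2)) ^ ((D : ℝ) / 2)) * D ^ 2 * M * (√b / b) := by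
          simp only [Finset.sum_const, Finset.card_univ, Fintype.card_fin, nsmul_eq_mul]
          field_simp
          ring
      _ = _ := by rw [nrm_mul_half D hb, Real.sqrt_div_self', mul_one_div]
  rw [abs_le']
  constructor
  · exact le_of_deriv_le (fun b hb => hasDerivAt_integral_dG hP x k hb)
      (fun b hb => (le_abs_self _).trans (key b hb)) (tendsto_integral_dG hP x k) ha
  · refine le_of_deriv_le (F := fun a => -∫ w, dG a x k w * P w)
      (fun b hb => (hasDerivAt_integral_dG hP x k hb).neg)
      (fun b hb => (neg_le_abs _).trans (key b hb)) ?_ ha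
    simpa using (tendsto_integral_dG hP x k).neg

/-! ### The Duhamel terms and one step of the scheme -/

lemma heatK_eq {lam t : ℝ} (hlam : 0 < lam) (ht : 0 < t) (y : Spc D) :
    heatK D lam y t = nrm D (1 / (4 * lam * t)) * exp (-(1 / (4 * lam * t) * ‖y‖ ^ 2)) := by
  rw [heatK, nrm, neg_div, Real.rpow_neg (by positivity), ← Real.inv_rpow (by positivity)]
  congr 2
  · field_simp
  · field_simp

lemma pd_heatK {lam t : ℝ} (hlam : 0 < lam) (ht : 0 < t) (x w : Spc D) (k : Fin D) :
    pd k (fun y => heatK D lam y t) (x - w) = dG (1 / (4 * lam * t)) x k w := by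
  simp only [heatK_eq hlam ht]
  set a := 1 / (4 * lam * t)
  have h := (hasFDerivAt_gauss a 0 (x - w)).const_mul (nrm D a)
  simp only [sub_zero] at h
  rw [pd_eq h, _root_.smul_apply, _root_.smul_apply, innerSL_single, dG, dg, norm_sub_rev]
  simp; ring

lemma heat_bound {lam t : ℝ} (hlam : 0 < lam) (ht : 0 < t) (x : Spc D) {f : Spc D → ℝ} {M : ℝ}
    (hf : ∀ w, |f w| ≤ M) : |∫ w, heatK D lam (x - w) t * f w| ≤ M := by
  have ha : 0 < 1 / (4 * lam * t) := by positivity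
  set a := 1 / (4 * lam * t) with hadef
  have hn := nrm_pos D ha
  have h : ‖∫ w, heatK D lam (x - w) t * f w‖ ≤ ∫ w, M * nrm D a * exp (-(a * ‖w - x‖ ^ 2)) := by
    refine norm_integral_le_of_norm_le ((integrable_gauss ha x).const_mul _) (ae_of_all _ fun w => ?_)
    rw [heatK_eq hlam ht, ← hadef, norm_mul, Real.norm_eq_abs, Real.norm_eq_abs,
      abs_of_pos (by positivity), norm_sub_rev, mul_comm, mul_assoc]
    gcongr
    exact hf w
  rw [integral_const_mul, integral_gauss ha, mul_assoc, nrm_mul_self D ha, mul_one] at h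
  exact h

lemma nonlinear_bound {a : ℝ} (ha : 0 < a) (x : Spc D) {h : Fin D → Spc D → ℝ} {M : ℝ}
    (hh : ∀ j w, |h j w| ≤ M) :
    |∫ w, ∑ j, dG a x j w * h j w| ≤ 2 * 2 ^ ((D : ℝ) / 2) * D * M * √a := by
  have hn := nrm_pos D ha
  have hb : ‖∫ w, ∑ j, dG a x j w * h j w‖
      ≤ ∫ w, D * (2 * √a * nrm D a) * M * exp (-(a / 2 * ‖w - x‖ ^ 2)) := by
    refine norm_integral_le_of_norm_le ((integrable_gauss (half_pos ha) x).const_mul _)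
      (ae_of_all _ fun w => ?_)
    calc ‖∑ j, dG a x j w * h j w‖
        ≤ ∑ _j : Fin D, 2 * √a * nrm D a * exp (-(a / 2 * ‖w - x‖ ^ 2)) * M := by
          refine (norm_sum_le _ _).trans (Finset.sum_le_sum fun j _ => ?_)
          rw [norm_mul, Real.norm_eq_abs, Real.norm_eq_abs]
          exact mul_le_mul (abs_dG_le ha x w j) (hh j w) (abs_nonneg _) (by positivity)
      _ = _ := by
          simp only [Finset.sum_const, Finset.card_univ, Fintype.card_fin, nsmul_eq_mul]; ring
  rw [integral_const_mul, integral_gauss (half_pos ha)] at hb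
  refine hb.trans (le_of_eq ?_)
  rw [← nrm_mul_half D ha]; ring

/-- Integration in time of the parabolic singularity `(t - s)^{-1/2}`. -/
lemma time_bound {lam t : ℝ} (hlam : 0 < lam) (ht : 0 < t) {f : ℝ → ℝ} {L : ℝ}
    (hf : ∀ s ∈ Ioo 0 t, |f s| ≤ L * √(1 / (4 * lam * (t - s)))) :
    |∫ s in Ioo 0 t, f s| ≤ L * (√t / √lam) := by
  have hI : IntervalIntegrable (fun s : ℝ => (t - s) ^ (-(1 / 2) : ℝ)) volume 0 t := by
    have := (intervalIntegral.intervalIntegrable_rpow' (a := t) (b := 0)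
      (r := (-(1 / 2) : ℝ)) (by norm_num)).comp_sub_left t
    simpa using this
  have hv : ∫ s in Ioo 0 t, (t - s) ^ (-(1 / 2) : ℝ) = 2 * √t := by
    rw [← integral_Ioc_eq_integral_Ioo, ← intervalIntegral.integral_of_le ht.le,
      intervalIntegral.integral_comp_sub_left (fun u : ℝ => u ^ (-(1 / 2) : ℝ)), sub_self, sub_zero,
      integral_rpow (Or.inl (by norm_num)), Real.sqrt_eq_rpow]
    norm_num
    ring
  have hI2 : IntegrableOn (fun s : ℝ => L * (1 / (2 * √lam)) * (t - s) ^ (-(1 / 2) : ℝ)) (Ioo 0 t) :=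
    (((intervalIntegrable_iff_integrableOn_Ioo_of_le ht.le).1 hI).const_mul _)
  have := norm_integral_le_of_norm_le (f := f) hI2 <| (ae_restrict_iff' measurableSet_Ioo).2 <|
    ae_of_all _ fun s hs => by
      have hts : 0 < t - s := by linarith [hs.2]
      refine (hf s hs).trans (le_of_eq ?_)
      suffices h : √(1 / (4 * lam * (t - s))) = 1 / (2 * √lam) * (t - s) ^ (-(1 / 2) : ℝ) by
        rw [h]; ring
      rw [Real.rpow_neg hts.le, ← Real.sqrt_eq_rpow, Real.sqrt_div zero_le_one, Real.sqrt_one,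
        Real.sqrt_mul (by positivity), Real.sqrt_mul (by norm_num),
        show √(4 : ℝ) = 2 by rw [show (4 : ℝ) = 2 ^ 2 by norm_num]; simp]
      have := Real.sqrt_pos.2 hlam
      have := Real.sqrt_pos.2 hts
      field_simp
  rw [integral_const_mul, hv] at this
  refine this.trans (le_of_eq ?_)
  have := Real.sqrt_pos.2 hlam
  field_simp

lemma norm_le_of_coord_le {z : Spc D} {R : ℝ} (hR : 0 ≤ R) (h : ∀ k, |z k| ≤ R) : ‖z‖ ≤ D * R := by
  refine abs_le_of_sq_le_sq' ?_ (by positivity) |>.2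
  rw [EuclideanSpace.norm_sq_eq]
  calc ∑ i, ‖z i‖ ^ 2 ≤ ∑ _i : Fin D, R ^ 2 :=
        Finset.sum_le_sum fun i _ => pow_le_pow_left₀ (norm_nonneg _) (h i) 2
    _ = D * R ^ 2 := by simp
    _ ≤ (D * R) ^ 2 := by
        rw [mul_pow]
        gcongr
        exact_mod_cast Nat.le_self_pow two_ne_zero D

lemma abs_quad_le {K a b c d : ℝ} (ha : |a| ≤ K) (hb : |b| ≤ K) (hc : |c| ≤ K) (hd : |d| ≤ K) :
    |a * b - c * d| ≤ 2 * K ^ 2 := by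
  have hK : 0 ≤ K := (abs_nonneg a).trans ha
  refine (abs_sub _ _).trans ?_
  rw [abs_mul, abs_mul]
  nlinarith [mul_le_mul ha hb (abs_nonneg b) hK, mul_le_mul hc hd (abs_nonneg d) hK]

/-- The constant in front of `K² √t` in the Duhamel terms for bounds `|U|, |B| ≤ K`. -/
def duhC (D : ℕ) (ν μ : ℝ) : ℝ :=
  2 ^ ((D : ℝ) / 2) * (4 * D + 44 * D ^ 2) * (1 / √ν + 1 / √μ)

/-- One step of the scheme: bounds by `K` on `(0,T)` give linear-plus-quadratic bounds for the
components of the next iterate. -/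
lemma step_bound {ν μ : ℝ} (hν : 0 < ν) (hμ : 0 < μ) {U₀ B₀ : Spc D → Spc D}
    {U B : ℕ → ℝ → Spc D → Spc D} {P : ℕ → ℝ → Spc D → ℝ}
    (hA : ApproxMHD D ν μ U₀ B₀ U B P) {M K T : ℝ}
    (hU₀ : ∀ x, ‖U₀ x‖ ≤ M) (hB₀ : ∀ x, ‖B₀ x‖ ≤ M) (n : ℕ)
    (hU : ∀ t ∈ Ioo 0 T, ∀ x, ‖U n t x‖ ≤ K) (hB : ∀ t ∈ Ioo 0 T, ∀ x, ‖B n t x‖ ≤ K)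
    {t : ℝ} (ht : t ∈ Ioo 0 T) (x : Spc D) (k : Fin D) :
    |U (n + 1) t x k| ≤ M + duhC D ν μ * K ^ 2 * √t ∧
    |B (n + 1) t x k| ≤ M + duhC D ν μ * K ^ 2 * √t := by
  obtain ⟨-, -, hP0, -, hstep, Cd, -, hPn⟩ := hA
  obtain ⟨eU, eB⟩ := hstep n t ht.1 x k
  have hK : 0 ≤ K := (norm_nonneg _).trans (hU t ht x)
  have hUc : ∀ s ∈ Ioo 0 t, ∀ w j, |U n s w j| ≤ K := fun s hs w j =>
    (abs_coord_le _ j).trans (hU s ⟨hs.1, hs.2.trans ht.2⟩ w)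
  have hBc : ∀ s ∈ Ioo 0 t, ∀ w j, |B n s w j| ≤ K := fun s hs w j =>
    (abs_coord_le _ j).trans (hB s ⟨hs.1, hs.2.trans ht.2⟩ w)
  have hν' := Real.sqrt_pos.2 hν
  have hμ' := Real.sqrt_pos.2 hμ
  have hquad : ∀ lam : ℝ, 0 < lam → ∀ q : ℝ → Fin D → Spc D → ℝ,
      (∀ s ∈ Ioo 0 t, ∀ j w, |q s j w| ≤ 2 * K ^ 2) →
      |∫ s in Ioo (0 : ℝ) t, ∫ w, ∑ j, pd j (fun y => heatK D lam y (t - s)) (x - w) * q s j w|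
        ≤ 2 * 2 ^ ((D : ℝ) / 2) * D * (2 * K ^ 2) * (√t / √lam) := fun lam hlam q hq => by
    refine time_bound hlam ht.1 fun s hs => ?_
    have hts : 0 < t - s := by linarith [hs.2]
    simp only [pd_heatK hlam hts]
    exact nonlinear_bound (by positivity) x (hq s hs)
  have hpress : |∫ s in Ioo (0 : ℝ) t, ∫ w, pd k (fun y => heatK D ν y (t - s)) (x - w) * P n s w|
      ≤ 2 * (11 * 2 ^ ((D : ℝ) / 2) * D ^ 2 * (2 * K ^ 2)) * (√t / √ν) := by
    refine time_bound hν ht.1 fun s hs => ?_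
    have hts : 0 < t - s := by linarith [hs.2]
    simp only [pd_heatK hν hts]
    cases n with
    | zero =>
      simp only [hP0, mul_zero, integral_zero, abs_zero]
      positivity
    | succ m =>
      obtain ⟨h1, h2, -⟩ := hPn m s hs.1
      exact pressure_bound h1 h2 (fun j l w => abs_quad_le (hUc s hs w j) (hUc s hs w l)
        (hBc s hs w j) (hBc s hs w l)) x k (by positivity)
  have hU1 := hquad ν hν (fun s j w => U n s w j * U n s w k - B n s w j * B n s w k)
    fun s hs j w => abs_quad_le (hUc s hs w j) (hUc s hs w k) (hBc s hs w j) (hBc s hs w k)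
  have hB1 := hquad μ hμ (fun s j w => U n s w j * B n s w k - B n s w j * U n s w k)
    fun s hs j w => abs_quad_le (hUc s hs w j) (hBc s hs w k) (hBc s hs w j) (hUc s hs w k)
  have hU2 := heat_bound hν ht.1 x (fun w => (abs_coord_le (U₀ w) k).trans (hU₀ w))
  have hB2 := heat_bound hμ ht.1 x (fun w => (abs_coord_le (B₀ w) k).trans (hB₀ w))
  have ht0 := Real.sqrt_nonneg t
  constructor
  · rw [eU]
    refine (abs_sub _ _).trans ((add_le_add ((abs_sub _ _).trans (add_le_add hU2 hU1)) hpress).trans ?_)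
    have : 0 ≤ 2 ^ ((D : ℝ) / 2) * (4 * D + 44 * D ^ 2) * (1 / √μ) * K ^ 2 * √t := by positivity
    rw [duhC]
    have e : 2 * 2 ^ ((D : ℝ) / 2) * D * (2 * K ^ 2) * (√t / √ν)
        + 2 * (11 * 2 ^ ((D : ℝ) / 2) * D ^ 2 * (2 * K ^ 2)) * (√t / √ν)
        = 2 ^ ((D : ℝ) / 2) * (4 * D + 44 * D ^ 2) * (1 / √ν) * K ^ 2 * √t := by
      ring
    linarith
  · rw [eB]
    refine (abs_sub _ _).trans ((add_le_add hB2 hB1).trans ?_)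
    have h1 : 0 ≤ 2 ^ ((D : ℝ) / 2) * (4 * D + 44 * D ^ 2) * (1 / √ν) * K ^ 2 * √t := by positivity
    have h2 : 0 ≤ 2 ^ ((D : ℝ) / 2) * (44 * D ^ 2) * (1 / √μ) * K ^ 2 * √t := by positivity
    rw [duhC]
    have e : 2 * 2 ^ ((D : ℝ) / 2) * D * (2 * K ^ 2) * (√t / √μ)
        = 2 ^ ((D : ℝ) / 2) * (4 * D) * (1 / √μ) * K ^ 2 * √t := by
      ring
    linarith

/-! ### Uniform bounds -/

/-- uniform `L^∞` bound on the approximants of the MHD scheme on a short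
time interval, with constants depending only on `μ`, `ν`, `D`. -/
theorem stmt2 (D : ℕ) (ν μ : ℝ) (hν : 0 < ν) (hμ : 0 < μ) :
    ∃ C₁ c : ℝ, 1 ≤ C₁ ∧ 0 < c ∧
      ∀ U₀ B₀ : Spc D → Spc D, MemLinf U₀ → MemLinf B₀ → DivFree U₀ → DivFree B₀ →
      ∀ (U B : ℕ → ℝ → Spc D → Spc D) (P : ℕ → ℝ → Spc D → ℝ),
        ApproxMHD D ν μ U₀ B₀ U B P →
      ∀ T : ℝ, 0 < T → T ≤ c / (supN U₀ + supN B₀) ^ 2 →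
      ∀ n : ℕ,
        BddAbove {v : ℝ | ∃ t ∈ Set.Ico (0 : ℝ) T, ∃ x, v = ‖U n t x‖} ∧
        BddAbove {v : ℝ | ∃ t ∈ Set.Ico (0 : ℝ) T, ∃ x, v = ‖B n t x‖} ∧
        stSupIco T (U n) + stSupIco T (B n) ≤ 2 * C₁ * (supN U₀ + supN B₀) := by
  have hdc : 0 ≤ duhC D ν μ := by unfold duhC; positivity
  set Q := D * duhC D ν μ * (D + 1) ^ 2 with hQ
  have hQ0 : 0 ≤ Q := by positivity
  refine ⟨D + 1, (1 / (1 + Q)) ^ 2, by linarith [(Nat.cast_nonneg D : (0 : ℝ) ≤ D)],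
    by positivity, ?_⟩
  intro U₀ B₀ hU₀ hB₀ _ _ U B P hA T hT hTc n
  have nU : 0 ≤ supN U₀ := Real.iSup_nonneg fun _ => norm_nonneg _
  have nB : 0 ≤ supN B₀ := Real.iSup_nonneg fun _ => norm_nonneg _
  have bU : ∀ x, ‖U₀ x‖ ≤ supN U₀ + supN B₀ := fun x => by
    have : ‖U₀ x‖ ≤ supN U₀ := le_ciSup hU₀.2 x
    linarith
  have bB : ∀ x, ‖B₀ x‖ ≤ supN U₀ + supN B₀ := fun x => by
    have : ‖B₀ x‖ ≤ supN B₀ := le_ciSup hB₀.2 x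
    linarith
  set M := supN U₀ + supN B₀ with hM
  have hM0 : 0 ≤ M := by positivity
  -- for `M = 0` the bound on `T` reads `T ≤ c / 0 = 0`
  have hMp : 0 < M := by
    rcases hM0.eq_or_lt with h | h
    · rw [← h] at hTc
      norm_num at hTc
      linarith
    · exact h
  have hMT : M * √T ≤ 1 / (1 + Q) := by
    rw [le_div_iff₀ (by positivity)] at hTc
    refine (pow_le_pow_iff_left₀ (by positivity) (by positivity) two_ne_zero).1 ?_
    rw [mul_pow, Real.sq_sqrt hT.le]
    linarith
  have hQM : Q * (M * √T) ≤ 1 := by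
    calc Q * (M * √T) ≤ Q * (1 / (1 + Q)) := by gcongr
      _ ≤ 1 := by rw [mul_one_div, div_le_one (by positivity)]; linarith
  have main : ∀ n, ∀ t ∈ Ico 0 T, ∀ x, ‖U n t x‖ ≤ (D + 1) * M ∧ ‖B n t x‖ ≤ (D + 1) * M := by
    intro n
    induction n with
    | zero =>
      intro t _ x
      rw [hA.1, hA.2.1]
      simp only [norm_zero]
      exact ⟨by positivity, by positivity⟩
    | succ n ih =>
      intro t ht x
      rcases ht.1.eq_or_lt with h0 | h0
      · obtain ⟨e1, e2⟩ := hA.2.2.2.1 n x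
        rw [← h0, e1, e2]
        have : M ≤ (D + 1) * M := le_mul_of_one_le_left hM0 (by simp)
        exact ⟨(bU x).trans this, (bB x).trans this⟩
      · have hs := step_bound hν hμ hA bU bB n (K := (D + 1) * M) (T := T)
          (fun s hs y => (ih s ⟨hs.1.le, hs.2⟩ y).1) (fun s hs y => (ih s ⟨hs.1.le, hs.2⟩ y).2)
          ⟨h0, ht.2⟩ x
        have hle : D * (M + duhC D ν μ * ((D + 1) * M) ^ 2 * √t) ≤ (D + 1) * M := by
          calc D * (M + duhC D ν μ * ((D + 1) * M) ^ 2 * √t)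
              = D * M + Q * (M * √t) * M := by rw [hQ]; ring
            _ ≤ D * M + Q * (M * √T) * M := by
                have := Real.sqrt_le_sqrt ht.2.le
                gcongr
            _ ≤ D * M + 1 * M := by gcongr
            _ = _ := by ring
        exact ⟨(norm_le_of_coord_le (by positivity) fun k => (hs k).1).trans hle,
          (norm_le_of_coord_le (by positivity) fun k => (hs k).2).trans hle⟩
  have hsup : ∀ F : ℝ → Spc D → Spc D, (∀ t ∈ Ico 0 T, ∀ x, ‖F t x‖ ≤ (D + 1) * M) →
      stSupIco T F ≤ (D + 1) * M := fun F hF =>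
    Real.iSup_le (fun t => Real.iSup_le (fun ht => Real.iSup_le (fun x => hF t ht x)
      (by positivity)) (by positivity)) (by positivity)
  refine ⟨⟨(D + 1) * M, ?_⟩, ⟨(D + 1) * M, ?_⟩, ?_⟩
  · rintro v ⟨t, ht, x, rfl⟩
    exact (main n t ht x).1
  · rintro v ⟨t, ht, x, rfl⟩
    exact (main n t ht x).2
  · have h1 := hsup (U n) fun t ht x => (main n t ht x).1
    have h2 := hsup (B n) fun t ht x => (main n t ht x).2
    linarith

end
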